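/- Let ϑ₁, ϑ₂ be Beurling weights on ℝ^d, let 1 < p, q, r < ∞, and let p', q', r' be the conjugate exponents (1/p + 1/p' = 1, etc.). Let K be the set of pairs (φ, ψ) ∈ (L^{p'}_{ϑ₁^{-1}}, ℓ^∞) × (L^{q'}_{ϑ₂^{-1}}, ℓ^{r'}) such that ∫_{ℝ^d} f(x)φ(x) dx + ∫_{ℝ^d} f̂(y)ψ(y) dy = 0 for all f ∈ A^{p,1,q,r}_{ϑ₁,ϑ₂}(ℝ^d). Then the continuous dual space of A^{p,1,q,r}_{ϑ₁,ϑ₂}(ℝ^d) is isomorphic, via a bounded linear bijection with bounded inverse, to the quotient Banach space ((L^{p'}_{ϑ₁^{-1}}, ℓ^∞) × (L^{q'}_{ϑ₂^{-1}}, ℓ^{r'}))/K. -/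

import Mathlib

open MeasureTheory Filter Topology
open scoped ENNReal NNReal BigOperators

noncomputable section

/-- The unit cube `α + [0,1)^d` at the integer point `α ∈ ℤ^d`. -/
def cube {d : ℕ} (α : Fin d → ℤ) : Set (Fin d → ℝ) :=
  Set.univ.pi fun i => Set.Ico (α i : ℝ) ((α i : ℝ) + 1)

/-- The weighted amalgam norm `‖f‖_{pq,ω}` of the space `(L^p_ω, ℓ^q)`. -/
def amalgamNorm {d : ℕ} (p q : ℝ) (ω : (Fin d → ℝ) → ℝ) (f : (Fin d → ℝ) → ℂ) : ℝ≥0∞ :=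
  (∑' α : Fin d → ℤ,
      (eLpNorm (fun x => ω x • f x) (ENNReal.ofReal p) (volume.restrict (cube α))) ^ q) ^ (1 / q)

/-- Membership in the weighted amalgam space `(L^p_ω, ℓ^q)`. -/
def MemAmalgam {d : ℕ} (p q : ℝ) (ω : (Fin d → ℝ) → ℝ) (f : (Fin d → ℝ) → ℂ) : Prop :=
  Measurable f ∧ amalgamNorm p q ω f < ⊤

/-- A Beurling weight: measurable, `ϑ ≥ 1` and submultiplicative. -/
def IsBeurling {d : ℕ} (ϑ : (Fin d → ℝ) → ℝ) : Prop :=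
  Measurable ϑ ∧ (∀ x, 1 ≤ ϑ x) ∧ ∀ x y, ϑ (x + y) ≤ ϑ x * ϑ y

/-- The Fourier transform `f̂(ξ) = ∫ f(x) e^{-2πi⟨x,ξ⟩} dx`. -/
def fourierT {d : ℕ} (f : (Fin d → ℝ) → ℂ) (ξ : Fin d → ℝ) : ℂ :=
  ∫ x : Fin d → ℝ,
    Complex.exp (-(2 * (Real.pi : ℂ) * Complex.I * ∑ i, (x i : ℂ) * (ξ i : ℂ))) * f x

/-- The norm of `A^{p,1,q,r}_{ϑ₁,ϑ₂}(ℝ^d)`. -/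
def ANorm {d : ℕ} (p q r : ℝ) (ϑ₁ ϑ₂ : (Fin d → ℝ) → ℝ) (f : (Fin d → ℝ) → ℂ) : ℝ≥0∞ :=
  amalgamNorm p 1 ϑ₁ f + amalgamNorm q r ϑ₂ (fourierT f)

/-- Membership in `A^{p,1,q,r}_{ϑ₁,ϑ₂}(ℝ^d)`. -/
def MemA {d : ℕ} (p q r : ℝ) (ϑ₁ ϑ₂ : (Fin d → ℝ) → ℝ) (f : (Fin d → ℝ) → ℂ) : Prop :=
  MemAmalgam p 1 ϑ₁ f ∧ MemAmalgam q r ϑ₂ (fourierT f)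

/-- Convolution `(f∗g)(x) = ∫ f(x−t)g(t) dt`. -/
def convF {d : ℕ} (f g : (Fin d → ℝ) → ℂ) (x : Fin d → ℝ) : ℂ :=
  ∫ t : Fin d → ℝ, f (x - t) * g t

/-- `ϑ ≺ ϑ'` : domination of weights up to a constant. -/
def Prec {d : ℕ} (ϑ ϑ' : (Fin d → ℝ) → ℝ) : Prop :=
  ∃ C : ℝ, 0 < C ∧ ∀ x, ϑ x ≤ C * ϑ' x

/-- The Beurling–Domar condition `∑_{n≥1} log ϑ(nx)/n² < ∞`. -/
def BeurlingDomar {d : ℕ} (ϑ : (Fin d → ℝ) → ℝ) : Prop :=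
  ∀ x : Fin d → ℝ, Summable fun n : ℕ => Real.log (ϑ ((n : ℝ) • x)) / (n : ℝ) ^ 2

/-- `w` does not tend to zero as `|x| → ∞`. -/
def NotVanishingAtInfty {d : ℕ} (w : (Fin d → ℝ) → ℝ) : Prop :=
  ∃ δ : ℝ, 0 < δ ∧ ∀ R : ℝ, 0 < R → ∃ x : Fin d → ℝ, R < ‖x‖ ∧ δ ≤ w x

end

/-- The weighted amalgam `ℓ^∞`-type norm of `(L^p_ω, ℓ^∞)`. -/
noncomputable def amalgamNormTop {d : ℕ} (p : ℝ) (ω : (Fin d → ℝ) → ℝ)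
    (f : (Fin d → ℝ) → ℂ) : ℝ≥0∞ :=
  ⨆ α : Fin d → ℤ, eLpNorm (fun x => ω x • f x) (ENNReal.ofReal p) (volume.restrict (cube α))

/-- Membership in `(L^p_ω, ℓ^∞)`. -/
def MemAmalgamTop {d : ℕ} (p : ℝ) (ω : (Fin d → ℝ) → ℝ) (f : (Fin d → ℝ) → ℂ) : Prop :=
  Measurable f ∧ amalgamNormTop p ω f < ⊤

/-- The natural pairing of a pair `(φ, ψ)` with an element `f` of
`A^{p,1,q,r}_{ϑ₁,ϑ₂}(ℝ^d)`: `⟨(φ,ψ), f⟩ = ∫ f φ + ∫ f̂ ψ`. -/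
noncomputable def pairA {d : ℕ} (φ ψ f : (Fin d → ℝ) → ℂ) : ℂ :=
  (∫ x : Fin d → ℝ, f x * φ x) + ∫ y : Fin d → ℝ, fourierT f y * ψ y

/-!
The map `f ↦ (ϑ₁ f, ϑ₂ f̂)`, cut along the unit cubes, embeds `A` linearly into
`ℓ¹(L^p(cube)) × ℓ^r(L^q(cube))`, and the norm of `A` is the sum of the two norms of the image. By
Hahn–Banach for the sum norm, a functional on `A` bounded by `M` is a sum of functionals bounded
by `M` on the two factors. On a single cube, of measure one, such a functional is integration
against an `L^{p'}` function: the set function `s ↦ T 1_s` is a complex measure, absolutely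
continuous with respect to Lebesgue measure, and its density lies in `L^{p'}` because its bounded
truncations are controlled by the norm of `T`. Testing a functional on finite sums of almost
norming vectors gives the `ℓ^∞` and `ℓ^{r'}` bounds on the sequence of its densities. Conversely,
Hölder's inequality on the cubes and then on `ℤ^d` shows that each pair defines a bounded
functional.
-/

section LpDuality

variable {X : Type*} [MeasurableSpace X] {μ : Measure X} {p q : ℝ≥0∞}

section Pairing

variable {𝕜 : Type*} [RCLike 𝕜] [Fact (1 ≤ p)] [Fact (1 ≤ q)] [p.HolderConjugate q]

variable (μ p q 𝕜) in
/-- The operator from `L^q` to the dual of `L^p` that sends `g` to `f ↦ ∫ f g`. -/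
noncomputable def integralPairing : Lp 𝕜 q μ →L[𝕜] StrongDual 𝕜 (Lp 𝕜 p μ) :=
  ((ContinuousLinearMap.mul 𝕜 𝕜).lpPairing μ p q).flip

lemma integralPairing_apply (g : Lp 𝕜 q μ) (f : Lp 𝕜 p μ) :
    integralPairing μ p q 𝕜 g f = ∫ x, f x * g x ∂μ :=
  (ContinuousLinearMap.mul 𝕜 𝕜).lpPairing_eq_integral f g

lemma rpow_norm_div_self_mul_self {r : ℝ} (hr : r ≠ 0) (z : 𝕜) :
    ((‖z‖ ^ r : ℝ) : 𝕜) / z * z = ((‖z‖ ^ r : ℝ) : 𝕜) := by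
  rcases eq_or_ne z 0 with rfl | hz
  · simp [Real.zero_rpow hr]
  · exact div_mul_cancel₀ _ hz

lemma norm_rpow_norm_div_self {r : ℝ} (hr : 1 < r) (z : 𝕜) :
    ‖((‖z‖ ^ r : ℝ) : 𝕜) / z‖ = ‖z‖ ^ (r - 1) := by
  rcases eq_or_ne z 0 with rfl | hz
  · simp [Real.zero_rpow (sub_pos.2 hr).ne']
  · rw [norm_div, RCLike.norm_ofReal, abs_of_nonneg (by positivity),
      Real.rpow_sub_one (norm_ne_zero_iff.2 hz)]

lemma norm_rpow_toReal_eq_integral (hq : q ≠ ∞) (g : Lp 𝕜 q μ) :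
    ‖g‖ ^ q.toReal = ∫ x, ‖g x‖ ^ q.toReal ∂μ := by
  have hq₀ : q ≠ 0 := (zero_lt_one.trans_le Fact.out).ne'
  rw [Lp.norm_def, (Lp.memLp g).eLpNorm_eq_integral_rpow_norm hq₀ hq,
    ENNReal.toReal_ofReal (by positivity),
    Real.rpow_inv_rpow (by positivity) (ENNReal.toReal_pos hq₀ hq).ne']

lemma norm_le_norm_integralPairing (hp : p ≠ ∞) (hq : q ≠ ∞) (g : Lp 𝕜 q μ) :
    ‖g‖ ≤ ‖integralPairing μ p q 𝕜 g‖ := by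
  have hpq : p.toReal.HolderConjugate q.toReal :=
    ENNReal.HolderConjugate.toReal_of_ne_top hp hq
  set r := q.toReal
  have hr₁ : 0 < r - 1 := hpq.symm.sub_one_pos
  have hexp : p * ENNReal.ofReal (r - 1) = q := by
    rw [← ENNReal.ofReal_toReal hp, ← ENNReal.ofReal_mul hpq.nonneg, mul_comm,
      hpq.symm.sub_one_mul_conj, ENNReal.ofReal_toReal hq]
  let f : X → 𝕜 := fun x => ((‖g x‖ ^ r : ℝ) : 𝕜) / g x
  have hf_norm : eLpNorm f p μ = eLpNorm g q μ ^ (r - 1) := by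
    calc eLpNorm f p μ = eLpNorm (fun x => ‖g x‖ ^ (r - 1)) p μ :=
          eLpNorm_congr_norm_ae (ae_of_all _ fun x => by
            rw [norm_rpow_norm_div_self hpq.symm.lt, Real.norm_of_nonneg (by positivity)])
      _ = eLpNorm g q μ ^ (r - 1) := by rw [eLpNorm_norm_rpow _ hr₁, hexp]
  have hf : MemLp f p μ := by
    refine ⟨?_, hf_norm ▸ ENNReal.rpow_lt_top_of_nonneg hr₁.le (Lp.eLpNorm_ne_top g)⟩
    have hg := (Lp.aestronglyMeasurable g).aemeasurable
    exact ((RCLike.measurable_ofReal.comp_aemeasurable (hg.norm.pow_const r)).div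
      hg).aestronglyMeasurable
  have hfg : integralPairing μ p q 𝕜 g (hf.toLp f) = ((‖g‖ ^ r : ℝ) : 𝕜) := by
    rw [integralPairing_apply, norm_rpow_toReal_eq_integral hq, ← integral_ofReal]
    refine integral_congr_ae ?_
    filter_upwards [hf.coeFn_toLp] with x hx
    rw [hx, rpow_norm_div_self_mul_self hpq.symm.ne_zero]
  have key : ‖g‖ ^ r ≤ ‖integralPairing μ p q 𝕜 g‖ * ‖g‖ ^ (r - 1) := by
    have := (integralPairing μ p q 𝕜 g).le_opNorm (hf.toLp f)
    rwa [hfg, RCLike.norm_ofReal, abs_of_nonneg (by positivity), Lp.norm_toLp, hf_norm,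
      ← ENNReal.toReal_rpow, ← Lp.norm_def] at this
  rcases (norm_nonneg g).eq_or_lt with h₀ | h₀
  · exact h₀ ▸ norm_nonneg _
  · rwa [← sub_add_cancel r 1, Real.rpow_add_one' h₀.le (by simpa using hpq.symm.ne_zero),
      add_sub_cancel_right, mul_comm, mul_le_mul_iff_left₀ (by positivity)] at key

end Pairing

section Representation

section Indicator

variable {𝕜 F : Type*} [RCLike 𝕜] [NormedAddCommGroup F] [NormedSpace 𝕜 F]

lemma indicatorConstLp_eq_smul_one {s : Set X} (hs : MeasurableSet s) (hμs : μ s ≠ ∞) (c : 𝕜) :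
    indicatorConstLp p hs hμs c = c • indicatorConstLp p hs hμs 1 := by
  rw [indicatorConstLp, indicatorConstLp, ← MemLp.toLp_const_smul]
  congr 1
  ext x
  by_cases hx : x ∈ s <;> simp [hx]

variable [IsFiniteMeasure μ]

lemma sum_indicatorConstLp {ι : Type*} {s : ι → Set X} (hs : ∀ i, MeasurableSet (s i))
    (hd : Pairwise (Function.onFun Disjoint s)) (c : 𝕜) (t : Finset ι) :
    ∑ i ∈ t, indicatorConstLp p (hs i) (measure_ne_top μ (s i)) c =
      indicatorConstLp p (t.measurableSet_biUnion fun i _ => hs i)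
        (measure_ne_top μ (⋃ i ∈ t, s i)) c := by
  classical
  induction t using Finset.induction_on with
  | empty => simp
  | insert a t ha ih =>
    have hat : Disjoint (s a) (⋃ i ∈ t, s i) :=
      Set.disjoint_iUnion₂_right.2 fun i hi => hd (ne_of_mem_of_not_mem hi ha).symm
    rw [Finset.sum_insert ha, ih, ← indicatorConstLp_disjoint_union _ _ _ _ hat]
    simp_rw [Finset.set_biUnion_insert]

lemma tendsto_measure_symmDiff_biUnion {ι : Type*} [Countable ι] {s : ι → Set X}
    (hs : ∀ i, MeasurableSet (s i)) :
    Tendsto (fun t : Finset ι => μ (symmDiff (⋃ i ∈ t, s i) (⋃ i, s i))) atTop (𝓝 0) := by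
  have hsub (t : Finset ι) : symmDiff (⋃ i ∈ t, s i) (⋃ i, s i) = (⋃ i, s i) \ ⋃ i ∈ t, s i :=
    symmDiff_of_le (Set.iUnion₂_subset_iUnion _ _)
  have hempty : ⋂ t : Finset ι, (⋃ i, s i) \ ⋃ i ∈ t, s i = ∅ := by
    rw [← Set.sdiff_iUnion, ← Set.iUnion_eq_iUnion_finset, Set.sdiff_self]
  simp_rw [hsub]
  rw [← measure_empty (μ := μ), ← hempty]
  refine tendsto_measure_iInter_atTop (fun t => ?_) (fun t u htu => ?_) ⟨∅, measure_ne_top μ _⟩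
  · exact ((MeasurableSet.iUnion hs).diff
      (t.measurableSet_biUnion fun i _ => hs i)).nullMeasurableSet
  · exact Set.sdiff_subset_sdiff_right (Set.biUnion_subset_biUnion_left htu)

variable [Fact (1 ≤ p)]

lemma continuousLinearMap_ext_indicatorConstLp (hp : p ≠ ∞) {S T : Lp 𝕜 p μ →L[𝕜] F}
    (h : ∀ (s : Set X) (hs : MeasurableSet s),
      S (indicatorConstLp p hs (measure_ne_top μ s) 1) =
        T (indicatorConstLp p hs (measure_ne_top μ s) 1)) : S = T := by
  ext f
  induction f using Lp.induction hp with
  | indicatorConst c hs hμs =>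
    rw [Lp.simpleFunc.coe_indicatorConst, indicatorConstLp_eq_smul_one, map_smul, map_smul, h _ hs]
  | add hf hg _ ihf ihg => rw [map_add, map_add, ihf, ihg]
  | isClosed => exact isClosed_eq S.continuous T.continuous

lemma hasSum_indicatorConstLp (hp : p ≠ ∞) {s : ℕ → Set X} (hs : ∀ i, MeasurableSet (s i))
    (hd : Pairwise (Function.onFun Disjoint s)) (c : 𝕜) :
    HasSum (fun i => indicatorConstLp p (hs i) (measure_ne_top μ (s i)) c)
      (indicatorConstLp p (MeasurableSet.iUnion hs) (measure_ne_top μ (⋃ i, s i)) c) := by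
  simp_rw [HasSum, sum_indicatorConstLp hs hd]
  exact tendsto_indicatorConstLp_set hp (tendsto_measure_symmDiff_biUnion hs)

open scoped Classical in
/-- The vector measure `s ↦ T 1_s` of an operator `T` on `L^p`, `p < ∞`. -/
noncomputable def indicatorVectorMeasure (hp : p ≠ ∞) (T : Lp 𝕜 p μ →L[𝕜] F) :
    VectorMeasure X F where
  measureOf' s :=
    if hs : MeasurableSet s then T (indicatorConstLp p hs (measure_ne_top μ s) 1) else 0
  empty' := by simp
  not_measurable' _ hs := dif_neg hs
  m_iUnion' s hs hd := by
    simp_rw [dif_pos (hs _), dif_pos (MeasurableSet.iUnion hs)]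
    exact (hasSum_indicatorConstLp hp hs hd 1).mapL T

lemma indicatorVectorMeasure_apply (hp : p ≠ ∞) (T : Lp 𝕜 p μ →L[𝕜] F) {s : Set X}
    (hs : MeasurableSet s) :
    indicatorVectorMeasure hp T s = T (indicatorConstLp p hs (measure_ne_top μ s) 1) :=
  dif_pos hs

lemma indicatorVectorMeasure_absolutelyContinuous (hp : p ≠ ∞) (T : Lp 𝕜 p μ →L[𝕜] F) :
    indicatorVectorMeasure hp T ≪ᵥ μ.toENNRealVectorMeasure := by
  refine VectorMeasure.AbsolutelyContinuous.mk fun s hs hμs => ?_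
  rw [Measure.toENNRealVectorMeasure_apply_measurable hs] at hμs
  have hzero : indicatorConstLp p hs (measure_ne_top μ s) (1 : 𝕜) = 0 := by
    rw [Lp.eq_zero_iff_ae_eq_zero]
    filter_upwards [indicatorConstLp_coeFn_notMem (p := p) (hs := hs)
      (hμs := measure_ne_top μ s) (c := (1 : 𝕜)), measure_eq_zero_iff_ae_notMem.1 hμs] with x hx hxs
    exact hx hxs
  rw [indicatorVectorMeasure_apply hp T hs, hzero, map_zero]

variable (p 𝕜) in
/-- Multiplication by the indicator of `E` as an operator on `L^p`. -/
noncomputable def indicatorMulL {E : Set X} (hE : MeasurableSet E) : Lp 𝕜 p μ →L[𝕜] Lp 𝕜 p μ :=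
  (ContinuousLinearMap.mul 𝕜 𝕜).holderL μ ∞ p p (indicatorConstLp ∞ hE (measure_ne_top μ E) 1)

lemma norm_indicatorMulL_le {E : Set X} (hE : MeasurableSet E) :
    ‖indicatorMulL p 𝕜 (μ := μ) hE‖ ≤ 1 := by
  refine ContinuousLinearMap.opNorm_le_bound _ zero_le_one fun f => ?_
  refine ((ContinuousLinearMap.mul 𝕜 𝕜).norm_holder_apply_apply_le _ _).trans ?_
  gcongr
  refine mul_le_one₀ (ContinuousLinearMap.opNorm_mul_le 𝕜 𝕜) (norm_nonneg _) ?_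
  simpa using norm_indicatorConstLp_le (p := ∞) (hs := hE) (hμs := measure_ne_top μ E)
    (c := (1 : 𝕜))

lemma indicatorMulL_indicatorConstLp {E s : Set X} (hE : MeasurableSet E) (hs : MeasurableSet s) :
    indicatorMulL p 𝕜 hE (indicatorConstLp p hs (measure_ne_top μ s) 1) =
      indicatorConstLp p (hs.inter hE) (measure_ne_top μ (s ∩ E)) 1 := by
  ext1
  refine ((ContinuousLinearMap.mul 𝕜 𝕜).coeFn_holder _ _).trans ?_
  filter_upwards [indicatorConstLp_coeFn (p := p) (hs := hs) (hμs := measure_ne_top μ s)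
      (c := (1 : 𝕜)),
    indicatorConstLp_coeFn (p := p) (hs := hs.inter hE) (hμs := measure_ne_top μ (s ∩ E))
      (c := (1 : 𝕜)),
    indicatorConstLp_coeFn (p := ∞) (hs := hE) (hμs := measure_ne_top μ E)
      (c := (1 : 𝕜))] with x hxs hxsE hxE
  rw [hxs, hxsE, hxE]
  by_cases hs : x ∈ s <;> by_cases hE : x ∈ E <;> simp [hs, hE]

end Indicator

lemma eLpNorm_le_of_forall_truncation_le {E : Type*} [NormedAddCommGroup E] {g : X → E}
    (hg : StronglyMeasurable g) {C : ℝ≥0∞}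
    (h : ∀ n : ℕ, eLpNorm ({x | ‖g x‖ ≤ n}.indicator g) q μ ≤ C) : eLpNorm g q μ ≤ C := by
  have hmeas (n : ℕ) : MeasurableSet {x | ‖g x‖ ≤ n} :=
    measurableSet_le hg.norm.measurable measurable_const
  refine (Lp.eLpNorm_lim_le_liminf_eLpNorm
    (fun n => (hg.indicator (hmeas n)).aestronglyMeasurable) g (ae_of_all _ fun x => ?_)).trans
    (liminf_le_of_le (by isBoundedDefault) fun b hb => hb.exists.elim fun n hn => hn.trans (h n))
  refine tendsto_const_nhds.congr' ?_
  filter_upwards [eventually_ge_atTop ⌈‖g x‖⌉₊] with n hn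
  exact (Set.indicator_of_mem (show x ∈ {x | ‖g x‖ ≤ n} from Nat.ceil_le.1 hn) g).symm

variable [IsFiniteMeasure μ]

lemma withDensityᵥ_complexMeasure_rnDeriv_eq {c : ComplexMeasure X}
    (hc : c ≪ᵥ μ.toENNRealVectorMeasure) : μ.withDensityᵥ (c.rnDeriv μ) = c := by
  obtain ⟨hre, him⟩ := (ComplexMeasure.absolutelyContinuous_ennreal_iff c _).1 hc
  ext s hs
  rw [withDensityᵥ_apply (c.integrable_rnDeriv μ) hs]
  have hint := (c.integrable_rnDeriv μ).integrableOn (s := s)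
  apply Complex.ext
  · rw [← RCLike.re_eq_complex_re, ← integral_re hint]
    exact (withDensityᵥ_apply (c.re.integrable_rnDeriv μ) hs).symm.trans
      (congrArg (fun v : SignedMeasure X => v s) (c.re.withDensityᵥ_rnDeriv_eq μ hre))
  · rw [← RCLike.im_eq_complex_im, ← integral_im hint]
    exact (withDensityᵥ_apply (c.im.integrable_rnDeriv μ) hs).symm.trans
      (congrArg (fun v : SignedMeasure X => v s) (c.im.withDensityᵥ_rnDeriv_eq μ him))

variable [Fact (1 ≤ p)]

lemma exists_setIntegral_eq_apply_indicatorConstLp (hp : p ≠ ∞) (Λ : StrongDual ℂ (Lp ℂ p μ)) :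
    ∃ g : X → ℂ, StronglyMeasurable g ∧
      ∀ (s : Set X) (hs : MeasurableSet s),
        Λ (indicatorConstLp p hs (measure_ne_top μ s) 1) = ∫ x in s, g x ∂μ := by
  let c : ComplexMeasure X := indicatorVectorMeasure hp Λ
  have hg := c.integrable_rnDeriv μ
  refine ⟨hg.1.mk _, hg.1.stronglyMeasurable_mk, fun s hs => ?_⟩
  rw [← integral_congr_ae (ae_restrict_of_ae hg.1.ae_eq_mk), ← withDensityᵥ_apply hg hs,
    withDensityᵥ_complexMeasure_rnDeriv_eq (indicatorVectorMeasure_absolutelyContinuous hp Λ),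
    indicatorVectorMeasure_apply hp Λ hs]

variable [Fact (1 ≤ q)] [p.HolderConjugate q]

lemma eq_integralPairing_of_apply_indicatorConstLp (hp : p ≠ ∞) {Λ : StrongDual ℂ (Lp ℂ p μ)}
    {g : X → ℂ} (hg : MemLp g q μ)
    (h : ∀ (s : Set X) (hs : MeasurableSet s),
      Λ (indicatorConstLp p hs (measure_ne_top μ s) 1) = ∫ x in s, g x ∂μ) :
    Λ = integralPairing μ p q ℂ (hg.toLp g) := by
  refine continuousLinearMap_ext_indicatorConstLp hp fun s hs => ?_
  rw [h, integralPairing_apply, ← integral_indicator hs]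
  refine integral_congr_ae ?_
  filter_upwards [indicatorConstLp_coeFn (p := p) (hs := hs) (hμs := measure_ne_top μ s)
    (c := (1 : ℂ)), hg.coeFn_toLp] with x hxs hxg
  rw [hxs, hxg]
  by_cases hx : x ∈ s <;> simp [hx]

lemma eLpNorm_indicator_le_enorm (hp : p ≠ ∞) (hq : q ≠ ∞) {Λ : StrongDual ℂ (Lp ℂ p μ)}
    {g : X → ℂ}
    (h : ∀ (s : Set X) (hs : MeasurableSet s),
      Λ (indicatorConstLp p hs (measure_ne_top μ s) 1) = ∫ x in s, g x ∂μ)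
    {E : Set X} (hE : MeasurableSet E) (hgE : MemLp (E.indicator g) q μ) :
    eLpNorm (E.indicator g) q μ ≤ ‖Λ‖ₑ := by
  have hΛE : Λ ∘L indicatorMulL p ℂ hE = integralPairing μ p q ℂ (hgE.toLp _) := by
    refine eq_integralPairing_of_apply_indicatorConstLp hp hgE fun s hs => ?_
    rw [ContinuousLinearMap.comp_apply, indicatorMulL_indicatorConstLp, h,
      setIntegral_indicator hE]
  rw [← Lp.enorm_toLp (hf := hgE), enorm_le_iff_norm_le]
  calc ‖hgE.toLp _‖ ≤ ‖Λ ∘L indicatorMulL p ℂ hE‖ := hΛE ▸ norm_le_norm_integralPairing hp hq _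
    _ ≤ ‖Λ‖ * ‖indicatorMulL p ℂ (μ := μ) hE‖ := Λ.opNorm_comp_le _
    _ ≤ ‖Λ‖ := mul_le_of_le_one_right (norm_nonneg _) (norm_indicatorMulL_le hE)

lemma integralPairing_surjective (hp : p ≠ ∞) (hq : q ≠ ∞) :
    Function.Surjective (integralPairing μ p q ℂ) := by
  intro Λ
  obtain ⟨g, hgm, hg⟩ := exists_setIntegral_eq_apply_indicatorConstLp hp Λ
  have htrunc (n : ℕ) : eLpNorm ({x | ‖g x‖ ≤ n}.indicator g) q μ ≤ ‖Λ‖ₑ := by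
    have hE : MeasurableSet {x | ‖g x‖ ≤ n} :=
      measurableSet_le hgm.norm.measurable measurable_const
    refine eLpNorm_indicator_le_enorm hp hq hg hE (.of_bound
      (hgm.indicator hE).aestronglyMeasurable n (ae_of_all _ fun x => ?_))
    by_cases hx : ‖g x‖ ≤ n <;> simp [hx]
  have hgL : MemLp g q μ :=
    ⟨hgm.aestronglyMeasurable, (eLpNorm_le_of_forall_truncation_le hgm htrunc).trans_lt
      enorm_lt_top⟩
  exact ⟨hgL.toLp g, (eq_integralPairing_of_apply_indicatorConstLp hp hgL hg).symm⟩

end Representation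

end LpDuality

section SequenceSpaceDuality

section NormingVectors

variable {𝕜 E : Type*} [RCLike 𝕜] [NormedAddCommGroup E] [NormedSpace 𝕜 E]

lemma exists_norm_le_one_mul_norm_le_re_apply (ℓ : StrongDual 𝕜 E) {c : ℝ} (hc : c < 1) :
    ∃ x : E, ‖x‖ ≤ 1 ∧ c * ‖ℓ‖ ≤ RCLike.re (ℓ x) := by
  rcases (norm_nonneg ℓ).eq_or_lt with hℓ | hℓ
  · exact ⟨0, by simp [← hℓ]⟩
  obtain ⟨x, hx, hcx⟩ := ℓ.exists_lt_apply_of_lt_opNorm (mul_lt_of_lt_one_left hℓ hc)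
  obtain ⟨u, hu, hux⟩ := RCLike.exists_norm_eq_mul_self (ℓ x)
  refine ⟨u • x, by rw [norm_smul, hu, one_mul]; exact hx.le, ?_⟩
  rw [map_smul, smul_eq_mul, ← hux, RCLike.ofReal_re]
  exact hcx.le

end NormingVectors

variable {ι 𝕜 : Type*} [DecidableEq ι] [RCLike 𝕜] {s : ℝ≥0∞} [Fact (1 ≤ s)]

section Coordinates

variable {E : ι → Type*} [∀ i, NormedAddCommGroup (E i)] [∀ i, NormedSpace 𝕜 (E i)]
  (L : StrongDual 𝕜 (lp E s))

lemma enorm_comp_lpSingle_le (i : ι) : ‖L ∘L lp.singleContinuousLinearMap 𝕜 E s i‖ₑ ≤ ‖L‖ₑ := by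
  rw [enorm_le_iff_norm_le]
  refine ContinuousLinearMap.opNorm_le_bound _ (norm_nonneg L) fun x => ?_
  rw [← lp.norm_single (zero_lt_one.trans_le (Fact.out : 1 ≤ s)) i x]
  exact L.le_opNorm _

lemma sum_nnnorm_comp_lpSingle_mul_le (hs : s ≠ ∞) (t : Finset ι) (a : ι → ℝ≥0) :
    ∑ i ∈ t, ‖L ∘L lp.singleContinuousLinearMap 𝕜 E s i‖₊ * a i ≤
      ‖L‖₊ * (∑ i ∈ t, a i ^ s.toReal) ^ (1 / s.toReal) := by
  have hs₀ : 0 < s.toReal := ENNReal.toReal_pos (zero_lt_one.trans_le Fact.out).ne' hs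
  refine NNReal.le_of_forall_lt_one_mul_le fun c hc => ?_
  choose x hx hLx using fun i =>
    exists_norm_le_one_mul_norm_le_re_apply (L ∘L lp.singleContinuousLinearMap 𝕜 E s i) hc
  let v : ∀ i, E i := fun i => ((a i : ℝ) : 𝕜) • x i
  have hv (i : ι) : ‖v i‖ ≤ a i := by
    rw [norm_smul, RCLike.norm_ofReal, NNReal.abs_eq]
    exact mul_le_of_le_one_right (a i).coe_nonneg (hx i)
  let y : lp E s := ∑ i ∈ t, lp.single s i (v i)
  have hy : ‖y‖ ≤ (∑ i ∈ t, (a i : ℝ) ^ s.toReal) ^ (1 / s.toReal) := by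
    rw [one_div, Real.le_rpow_inv_iff_of_pos (norm_nonneg y) (by positivity) hs₀,
      lp.norm_sum_single hs₀]
    gcongr with i
    exact hv i
  have hLy : ∑ i ∈ t, c * (‖L ∘L lp.singleContinuousLinearMap 𝕜 E s i‖ * a i) ≤
      RCLike.re (L y) := by
    rw [map_sum, map_sum]
    refine Finset.sum_le_sum fun i _ => ?_
    rw [lp.single_smul, map_smul, smul_eq_mul, RCLike.re_ofReal_mul, ← mul_assoc, mul_comm]
    exact mul_le_mul_of_nonneg_left (hLx i) (a i).coe_nonneg
  rw [Finset.mul_sum, ← NNReal.coe_le_coe]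
  push_cast
  exact hLy.trans ((RCLike.re_le_norm _).trans (L.le_opNorm_of_le hy))

lemma tsum_enorm_comp_lpSingle_rpow_le {s' : ℝ} (hs : s.toReal.HolderConjugate s') :
    (∑' i, ‖L ∘L lp.singleContinuousLinearMap 𝕜 E s i‖ₑ ^ s') ^ (1 / s') ≤ ‖L‖ₑ := by
  have hs' : 0 < s' := hs.symm.pos
  have hs_top : s ≠ ∞ := by rintro rfl; exact hs.ne_zero rfl
  rw [one_div, ENNReal.rpow_inv_le_iff hs', ENNReal.tsum_eq_iSup_sum]
  refine iSup_le fun t => ?_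
  obtain ⟨⟨a, ha, hsum⟩, -⟩ := NNReal.isGreatest_Lp t
    (fun i => ‖L ∘L lp.singleContinuousLinearMap 𝕜 E s i‖₊) hs.symm
  have hle : (∑ i ∈ t, ‖L ∘L lp.singleContinuousLinearMap 𝕜 E s i‖₊ ^ s') ^ (1 / s') ≤ ‖L‖₊ := by
    rw [← hsum]
    refine (sum_nnnorm_comp_lpSingle_mul_le L hs_top t a).trans (mul_le_of_le_one_right' ?_)
    exact NNReal.rpow_le_one ha (by positivity)
  rw [one_div, NNReal.rpow_inv_le_iff hs'] at hle
  simp_rw [enorm_eq_nnnorm, ← ENNReal.coe_rpow_of_nonneg _ hs'.le]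
  exact_mod_cast hle

end Coordinates

lemma exists_hasSum_integral_mul_of_lp {X : Type*} [MeasurableSpace X] {μ : ι → Measure X}
    [∀ i, IsFiniteMeasure (μ i)] {p q : ℝ≥0∞} [Fact (1 ≤ p)] [Fact (1 ≤ q)] [p.HolderConjugate q]
    (hp : p ≠ ∞) (hq : q ≠ ∞) (hs : s ≠ ∞) (L : StrongDual ℂ (lp (fun i => Lp ℂ p (μ i)) s)) :
    ∃ g : ι → X → ℂ, (∀ i, StronglyMeasurable (g i)) ∧
      (∀ i, eLpNorm (g i) q (μ i) ≤
        ‖L ∘L lp.singleContinuousLinearMap ℂ (fun i => Lp ℂ p (μ i)) s i‖ₑ) ∧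
      ∀ y, HasSum (fun i => ∫ x, y i x * g i x ∂μ i) (L y) := by
  choose g hg using fun i => integralPairing_surjective (μ := μ i) (q := q) hp hq
    (L ∘L lp.singleContinuousLinearMap ℂ (fun i => Lp ℂ p (μ i)) s i)
  refine ⟨fun i => g i, fun i => Lp.stronglyMeasurable (g i), fun i => ?_, fun y => ?_⟩
  · rw [← Lp.enorm_def, ← hg, enorm_le_iff_norm_le]
    exact norm_le_norm_integralPairing hp hq (g i)
  · simp_rw [← integralPairing_apply, hg]
    exact (lp.hasSum_single hs y).mapL L

end SequenceSpaceDuality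

section HahnBanach

variable {𝕜 V E F : Type*} [RCLike 𝕜] [AddCommGroup V] [Module 𝕜 V]
  [NormedAddCommGroup E] [NormedSpace 𝕜 E] [NormedAddCommGroup F] [NormedSpace 𝕜 F]

lemma exists_dual_comp_eq_of_norm_le {M : ℝ} (hM : 0 ≤ M) (j : V →ₗ[𝕜] E) (T : V →ₗ[𝕜] 𝕜)
    (hT : ∀ v, ‖T v‖ ≤ M * ‖j v‖) : ∃ g : StrongDual 𝕜 E, ‖g‖ ≤ M ∧ ∀ v, g (j v) = T v := by
  have hker : LinearMap.ker j ≤ LinearMap.ker T := fun v hv => by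
    simpa [LinearMap.mem_ker.1 hv] using hT v
  let T₀ : LinearMap.range j →ₗ[𝕜] 𝕜 :=
    (LinearMap.ker j).liftQ T hker ∘ₗ j.quotKerEquivRange.symm.toLinearMap
  have hT₀ (v : V) : T₀ ⟨j v, v, rfl⟩ = T v := by
    have : j.quotKerEquivRange.symm ⟨j v, v, rfl⟩ = Submodule.Quotient.mk v :=
      (LinearEquiv.symm_apply_eq _).2 rfl
    simp [T₀, this]
  have hbound : ∀ w, ‖T₀ w‖ ≤ M * ‖w‖ := by
    rintro ⟨_, v, rfl⟩
    exact hT₀ v ▸ hT v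
  obtain ⟨g, hg, hgnorm⟩ := exists_extension_norm_eq _ (T₀.mkContinuous M hbound)
  exact ⟨g, hgnorm.trans_le (T₀.mkContinuous_norm_le hM hbound),
    fun v => (hg ⟨j v, v, rfl⟩).trans (hT₀ v)⟩

lemma exists_dual_add_eq_of_norm_le {M : ℝ} (hM : 0 ≤ M) (j₁ : V →ₗ[𝕜] E) (j₂ : V →ₗ[𝕜] F)
    (T : V →ₗ[𝕜] 𝕜) (hT : ∀ v, ‖T v‖ ≤ M * (‖j₁ v‖ + ‖j₂ v‖)) :
    ∃ (g₁ : StrongDual 𝕜 E) (g₂ : StrongDual 𝕜 F), ‖g₁‖ ≤ M ∧ ‖g₂‖ ≤ M ∧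
      ∀ v, T v = g₁ (j₁ v) + g₂ (j₂ v) := by
  let j : V →ₗ[𝕜] WithLp 1 (E × F) :=
    (WithLp.linearEquiv 1 𝕜 (E × F)).symm.toLinearMap ∘ₗ j₁.prod j₂
  obtain ⟨g, hg, hgT⟩ := exists_dual_comp_eq_of_norm_le hM j T fun v => by
    rw [WithLp.prod_norm_eq_of_L1]
    exact hT v
  let e := (WithLp.prodContinuousLinearEquiv 1 𝕜 E F).symm.toContinuousLinearMap
  refine ⟨g ∘L e ∘L .inl 𝕜 E F, g ∘L e ∘L .inr 𝕜 E F, ?_, ?_, fun v => ?_⟩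
  · refine ContinuousLinearMap.opNorm_le_bound _ hM fun x => g.le_of_opNorm_le_of_le hg ?_
    simp [e]
  · refine ContinuousLinearMap.opNorm_le_bound _ hM fun x => g.le_of_opNorm_le_of_le hg ?_
    simp [e]
  · rw [← hgT]
    simp only [ContinuousLinearMap.comp_apply, ← map_add]
    simp [e, j]

end HahnBanach

section Cubes

variable {d : ℕ}

lemma mem_cube_iff {α : Fin d → ℤ} {x : Fin d → ℝ} : x ∈ cube α ↔ (fun i => ⌊x i⌋) = α := by
  simp only [cube, Set.mem_pi, Set.mem_univ, true_implies, Set.mem_Ico, funext_iff,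
    Int.floor_eq_iff]

lemma measurableSet_cube (α : Fin d → ℤ) : MeasurableSet (cube α) :=
  MeasurableSet.univ_pi fun _ => measurableSet_Ico

lemma pairwise_disjoint_cube : Pairwise (Function.onFun Disjoint (cube (d := d))) :=
  fun _ _ hαβ => Set.disjoint_left.2 fun _ hα hβ =>
    hαβ ((mem_cube_iff.1 hα).symm.trans (mem_cube_iff.1 hβ))

lemma iUnion_cube : ⋃ α : Fin d → ℤ, cube α = Set.univ :=
  Set.iUnion_eq_univ_iff.2 fun _ => ⟨_, mem_cube_iff.2 rfl⟩

lemma volume_cube (α : Fin d → ℤ) : volume (cube α) = 1 := by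
  simp [cube, volume_pi_pi]

instance isProbabilityMeasure_restrict_cube (α : Fin d → ℤ) :
    IsProbabilityMeasure (volume.restrict (cube α)) :=
  ⟨by rw [Measure.restrict_apply_univ, volume_cube]⟩

lemma lintegral_eq_tsum_cube (F : (Fin d → ℝ) → ℝ≥0∞) :
    ∫⁻ x, F x = ∑' α : Fin d → ℤ, ∫⁻ x in cube α, F x := by
  rw [← lintegral_iUnion measurableSet_cube pairwise_disjoint_cube, iUnion_cube,
    Measure.restrict_univ]

lemma hasSum_setIntegral_cube {E : Type*} [NormedAddCommGroup E] [NormedSpace ℝ E]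
    {F : (Fin d → ℝ) → E} (hF : Integrable F) :
    HasSum (fun α : Fin d → ℤ => ∫ x in cube α, F x) (∫ x, F x) := by
  have := hasSum_integral_iUnion measurableSet_cube pairwise_disjoint_cube
    (f := F) (μ := volume) hF.integrableOn
  rwa [iUnion_cube, setIntegral_univ] at this

lemma exists_measurable_eqOn_cube {Y : Type*} [MeasurableSpace Y]
    {g : (Fin d → ℤ) → (Fin d → ℝ) → Y} (hg : ∀ α, Measurable (g α)) :
    ∃ G : (Fin d → ℝ) → Y, Measurable G ∧ ∀ α, Set.EqOn G (g α) (cube α) := by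
  refine ⟨fun x => g (fun i => ⌊x i⌋) x, ?_, fun α x hx => congrFun
    (congrArg g (mem_cube_iff.1 hx)) x⟩
  have hfloor : Measurable fun x : Fin d → ℝ => ((fun i => ⌊x i⌋ : Fin d → ℤ), x) :=
    (measurable_pi_lambda _ fun i => Int.measurable_floor.comp (measurable_pi_apply i)).prodMk
      measurable_id
  have huncurry : Measurable fun z : (Fin d → ℤ) × (Fin d → ℝ) => g z.1 z.2 :=
    measurable_from_prod_countable_right hg
  exact huncurry.comp hfloor

end Cubes

section Holder

lemma tsum_mul_le_Lp_mul_Lq {ι : Type*} {r r' : ℝ} (hr : r.HolderConjugate r')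
    (a b : ι → ℝ≥0∞) :
    ∑' i, a i * b i ≤ (∑' i, a i ^ r) ^ (1 / r) * (∑' i, b i ^ r') ^ (1 / r') := by
  have := hr.pos
  have := hr.symm.pos
  rw [ENNReal.tsum_eq_iSup_sum]
  refine iSup_le fun t => (ENNReal.inner_le_Lp_mul_Lq t a b hr).trans ?_
  gcongr <;> exact ENNReal.sum_le_tsum t

lemma lintegral_enorm_mul_le_eLpNorm_smul_mul_eLpNorm_inv_smul {X : Type*} [MeasurableSpace X]
    {μ : Measure X} {p q : ℝ≥0∞} [p.HolderConjugate q] {ω : X → ℝ} (hω : Measurable ω)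
    (hω₀ : ∀ x, ω x ≠ 0) {f g : X → ℂ} (hf : AEStronglyMeasurable f μ)
    (hg : AEStronglyMeasurable g μ) :
    ∫⁻ x, ‖f x * g x‖ₑ ∂μ ≤
      eLpNorm (fun x => ω x • f x) p μ * eLpNorm (fun x => (ω x)⁻¹ • g x) q μ := by
  have hcancel : (fun x => ω x • f x) • (fun x => (ω x)⁻¹ • g x) = fun x => f x * g x := by
    ext x
    simp only [Pi.smul_apply', smul_eq_mul, smul_mul_smul_comm, mul_inv_cancel₀ (hω₀ x), one_smul]
  rw [← eLpNorm_one_eq_lintegral_enorm, ← hcancel]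
  exact eLpNorm_smul_le_mul_eLpNorm (hω.inv.aestronglyMeasurable.smul hg)
    (hω.aestronglyMeasurable.smul hf)

variable {d : ℕ} {p p' : ℝ} {ω : (Fin d → ℝ) → ℝ} {f g : (Fin d → ℝ) → ℂ}

lemma eLpNorm_cube_le_amalgamNormTop (α : Fin d → ℤ) :
    eLpNorm (fun x => ω x • f x) (ENNReal.ofReal p) (volume.restrict (cube α)) ≤
      amalgamNormTop p ω f :=
  le_iSup (fun α => eLpNorm (fun x => ω x • f x) (ENNReal.ofReal p)
    (volume.restrict (cube α))) α

lemma lintegral_enorm_mul_le_amalgamNorm_one_mul_amalgamNormTop (hp : p.HolderConjugate p')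
    (hω : Measurable ω) (hω₀ : ∀ x, ω x ≠ 0) (hf : Measurable f) (hg : Measurable g) :
    ∫⁻ x, ‖f x * g x‖ₑ ≤ amalgamNorm p 1 ω f * amalgamNormTop p' (fun x => (ω x)⁻¹) g := by
  have := hp.ennrealOfReal
  simp_rw [lintegral_eq_tsum_cube, amalgamNorm, div_one, ENNReal.rpow_one,
    ← ENNReal.tsum_mul_right]
  refine ENNReal.tsum_le_tsum fun α => (lintegral_enorm_mul_le_eLpNorm_smul_mul_eLpNorm_inv_smul
    (p := ENNReal.ofReal p) (q := ENNReal.ofReal p') hω hω₀ hf.aestronglyMeasurable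
      hg.aestronglyMeasurable).trans ?_
  gcongr
  exact eLpNorm_cube_le_amalgamNormTop α

lemma lintegral_enorm_mul_le_amalgamNorm_mul_amalgamNorm {r r' : ℝ} (hp : p.HolderConjugate p')
    (hr : r.HolderConjugate r') (hω : Measurable ω) (hω₀ : ∀ x, ω x ≠ 0) (hf : Measurable f)
    (hg : Measurable g) :
    ∫⁻ x, ‖f x * g x‖ₑ ≤ amalgamNorm p r ω f * amalgamNorm p' r' (fun x => (ω x)⁻¹) g := by
  have := hp.ennrealOfReal
  rw [lintegral_eq_tsum_cube]
  exact (ENNReal.tsum_le_tsum fun α =>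
    lintegral_enorm_mul_le_eLpNorm_smul_mul_eLpNorm_inv_smul hω hω₀ hf.aestronglyMeasurable
      hg.aestronglyMeasurable).trans (tsum_mul_le_Lp_mul_Lq hr _ _)

end Holder

section Amalgam

/-- The `ℓ^s`-sum of the spaces `L^p` over the unit cubes. The function `f` of the weighted
amalgam space `(L^p_ω, ℓ^s)` corresponds to the restrictions of `ω f` to the cubes. -/
abbrev AmalgamLp (d : ℕ) (p s : ℝ) [Fact (1 ≤ ENNReal.ofReal p)] : Type :=
  lp (fun α : Fin d → ℤ => Lp ℂ (ENNReal.ofReal p) (volume.restrict (cube α))) (ENNReal.ofReal s)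

variable {d : ℕ} {p s : ℝ} {ω : (Fin d → ℝ) → ℝ} {f g : (Fin d → ℝ) → ℂ}

section ToLp

lemma pos_of_one_le_ofReal [Fact (1 ≤ ENNReal.ofReal s)] : 0 < s :=
  zero_lt_one.trans_le (ENNReal.one_le_ofReal.1 Fact.out)

lemma MemAmalgam.tsum_ne_top (hs : 0 < s) (hf : MemAmalgam p s ω f) :
    ∑' α : Fin d → ℤ, eLpNorm (fun x => ω x • f x) (ENNReal.ofReal p)
      (volume.restrict (cube α)) ^ s ≠ ∞ := fun h => by
  have := hf.2
  rw [amalgamNorm, h, ENNReal.top_rpow_of_pos (by positivity)] at this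
  exact this.false

lemma MemAmalgam.memLp (hs : 0 < s) (hω : Measurable ω) (hf : MemAmalgam p s ω f)
    (α : Fin d → ℤ) :
    MemLp (fun x => ω x • f x) (ENNReal.ofReal p) (volume.restrict (cube α)) :=
  ⟨(hω.smul hf.1).aestronglyMeasurable, (ENNReal.rpow_lt_top_iff_of_pos hs).1
    (ENNReal.ne_top_of_tsum_ne_top (hf.tsum_ne_top hs) α).lt_top⟩

variable [Fact (1 ≤ ENNReal.ofReal p)] [Fact (1 ≤ ENNReal.ofReal s)]

lemma amalgamNorm_eq_enorm {y : AmalgamLp d p s}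
    (hy : ∀ α, y α =ᵐ[volume.restrict (cube α)] fun x => ω x • f x) :
    amalgamNorm p s ω f = ‖y‖ₑ := by
  have hs : 0 < s := pos_of_one_le_ofReal
  have hs' : (ENNReal.ofReal s).toReal = s := ENNReal.toReal_ofReal hs.le
  have hsum := (lp.memℓp y).summable (hs'.symm ▸ hs)
  rw [hs'] at hsum
  rw [← ofReal_norm, lp.norm_eq_tsum_rpow (hs'.symm ▸ hs), hs',
    ← ENNReal.ofReal_rpow_of_nonneg (tsum_nonneg fun α => by positivity) (by positivity),
    ENNReal.ofReal_tsum_of_nonneg (fun α => by positivity) hsum, amalgamNorm]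
  congr! 3 with α
  rw [← ENNReal.ofReal_rpow_of_nonneg (norm_nonneg _) hs.le, ofReal_norm, Lp.enorm_def,
    eLpNorm_congr_ae (hy α)]

lemma memAmalgam_of_ae_eq (hf : Measurable f) {y : AmalgamLp d p s}
    (hy : ∀ α, y α =ᵐ[volume.restrict (cube α)] fun x => ω x • f x) : MemAmalgam p s ω f :=
  ⟨hf, amalgamNorm_eq_enorm hy ▸ enorm_lt_top⟩

lemma memAmalgam_zero : MemAmalgam p s ω (0 : (Fin d → ℝ) → ℂ) :=
  memAmalgam_of_ae_eq measurable_zero (y := 0) fun α => by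
    filter_upwards [Lp.coeFn_zero ℂ (ENNReal.ofReal p) (volume.restrict (cube α))] with x hx
    rw [Pi.zero_apply, smul_zero]
    exact hx

variable (hω : Measurable ω)
include hω

/-- The element of `AmalgamLp` that corresponds to `f`. -/
noncomputable def MemAmalgam.toLp (hf : MemAmalgam p s ω f) : AmalgamLp d p s :=
  ⟨fun α => (hf.memLp pos_of_one_le_ofReal hω α).toLp _, by
    refine memℓp_gen ?_
    rw [ENNReal.toReal_ofReal pos_of_one_le_ofReal.le]
    simpa only [Lp.norm_toLp, ENNReal.toReal_rpow] using
      ENNReal.summable_toReal (hf.tsum_ne_top pos_of_one_le_ofReal)⟩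

lemma MemAmalgam.coeFn_toLp (hf : MemAmalgam p s ω f) (α : Fin d → ℤ) :
    hf.toLp hω α =ᵐ[volume.restrict (cube α)] fun x => ω x • f x :=
  (hf.memLp pos_of_one_le_ofReal hω α).coeFn_toLp

lemma MemAmalgam.enorm_toLp (hf : MemAmalgam p s ω f) : ‖hf.toLp hω‖ₑ = amalgamNorm p s ω f :=
  (amalgamNorm_eq_enorm (hf.coeFn_toLp hω)).symm

lemma MemAmalgam.toLp_eq_of_ae_eq (hf : MemAmalgam p s ω f) {y : AmalgamLp d p s}
    (hy : ∀ α, y α =ᵐ[volume.restrict (cube α)] fun x => ω x • f x) : hf.toLp hω = y :=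
  lp.ext (funext fun α => Lp.ext ((hf.coeFn_toLp hω α).trans (hy α).symm))

lemma MemAmalgam.toLp_add_ae_eq (hf : MemAmalgam p s ω f) (hg : MemAmalgam p s ω g)
    (α : Fin d → ℤ) : (hf.toLp hω + hg.toLp hω : AmalgamLp d p s) α
      =ᵐ[volume.restrict (cube α)] fun x => ω x • (f + g) x := by
  rw [lp.coeFn_add, Pi.add_apply]
  filter_upwards [Lp.coeFn_add (hf.toLp hω α) (hg.toLp hω α), hf.coeFn_toLp hω α,
    hg.coeFn_toLp hω α] with x hsum hfx hgx
  rw [hsum, Pi.add_apply, hfx, hgx, Pi.add_apply, smul_add]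

lemma MemAmalgam.smul_toLp_ae_eq (a : ℂ) (hf : MemAmalgam p s ω f) (α : Fin d → ℤ) :
    (a • hf.toLp hω : AmalgamLp d p s) α
      =ᵐ[volume.restrict (cube α)] fun x => ω x • (a • f) x := by
  rw [lp.coeFn_smul, Pi.smul_apply]
  filter_upwards [Lp.coeFn_smul a (hf.toLp hω α), hf.coeFn_toLp hω α] with x hsmul hfx
  rw [hsmul, Pi.smul_apply, hfx, Pi.smul_apply, smul_comm]

lemma MemAmalgam.add (hf : MemAmalgam p s ω f) (hg : MemAmalgam p s ω g) :
    MemAmalgam p s ω (f + g) :=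
  memAmalgam_of_ae_eq (hf.1.add hg.1) (hf.toLp_add_ae_eq hω hg)

lemma MemAmalgam.smul (a : ℂ) (hf : MemAmalgam p s ω f) : MemAmalgam p s ω (a • f) :=
  memAmalgam_of_ae_eq (hf.1.const_smul a) (hf.smul_toLp_ae_eq hω a)

end ToLp

section Dual

instance fact_one_le_ofReal_one : Fact (1 ≤ ENNReal.ofReal 1) := ⟨ENNReal.ofReal_one.ge⟩

variable [Fact (1 ≤ ENNReal.ofReal p)] [Fact (1 ≤ ENNReal.ofReal s)] {p' : ℝ}

lemma exists_hasSum_setIntegral_mul_of_amalgamLp (hp : p.HolderConjugate p')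
    (L : StrongDual ℂ (AmalgamLp d p s)) :
    ∃ G : (Fin d → ℝ) → ℂ, Measurable G ∧
      (∀ α, eLpNorm G (ENNReal.ofReal p') (volume.restrict (cube α)) ≤
        ‖L ∘L lp.singleContinuousLinearMap ℂ _ (ENNReal.ofReal s) α‖ₑ) ∧
      ∀ y : AmalgamLp d p s, HasSum (fun α => ∫ x in cube α, y α x * G x) (L y) := by
  have := hp.ennrealOfReal
  have : Fact (1 ≤ ENNReal.ofReal p') := ⟨ENNReal.one_le_ofReal.2 hp.symm.lt.le⟩
  obtain ⟨g, hgm, hgL, hLg⟩ := exists_hasSum_integral_mul_of_lp (q := ENNReal.ofReal p')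
    ENNReal.ofReal_ne_top ENNReal.ofReal_ne_top ENNReal.ofReal_ne_top L
  obtain ⟨G, hGm, hGg⟩ := exists_measurable_eqOn_cube fun α => (hgm α).measurable
  refine ⟨G, hGm, fun α => ?_, fun y => ?_⟩
  · rw [eLpNorm_congr_ae ((hGg α).aeEq_restrict (measurableSet_cube α))]
    exact hgL α
  · refine (hLg y).congr_fun fun α => setIntegral_congr_fun (measurableSet_cube α) fun x hx => ?_
    simp only [hGg α hx]

lemma exists_integral_mul_of_amalgamLp (hp : p.HolderConjugate p') (hω : Measurable ω)
    (hω₀ : ∀ x, ω x ≠ 0) (L : StrongDual ℂ (AmalgamLp d p s)) :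
    ∃ φ : (Fin d → ℝ) → ℂ, Measurable φ ∧
      (∀ α, eLpNorm (fun x => (ω x)⁻¹ • φ x) (ENNReal.ofReal p') (volume.restrict (cube α)) ≤
        ‖L ∘L lp.singleContinuousLinearMap ℂ _ (ENNReal.ofReal s) α‖ₑ) ∧
      ∀ (f : (Fin d → ℝ) → ℂ) (hf : MemAmalgam p s ω f),
        Integrable (fun x => f x * φ x) → L (hf.toLp hω) = ∫ x, f x * φ x := by
  obtain ⟨G, hGm, hGL, hLG⟩ := exists_hasSum_setIntegral_mul_of_amalgamLp hp L
  refine ⟨fun x => ω x • G x, hω.smul hGm, ?_, fun f hf hint => ?_⟩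
  · simpa only [inv_smul_smul₀ (hω₀ _)] using hGL
  · refine ((hLG _).congr_fun fun α => integral_congr_ae ?_).unique (hasSum_setIntegral_cube hint)
    filter_upwards [hf.coeFn_toLp hω α] with x hx
    rw [hx, smul_mul_assoc, mul_smul_comm]

lemma exists_memAmalgamTop_integral_mul (hp : p.HolderConjugate p')
    (hω : Measurable ω) (hω₀ : ∀ x, ω x ≠ 0) (L : StrongDual ℂ (AmalgamLp d p 1)) :
    ∃ φ : (Fin d → ℝ) → ℂ, MemAmalgamTop p' (fun x => (ω x)⁻¹) φ ∧
      amalgamNormTop p' (fun x => (ω x)⁻¹) φ ≤ ‖L‖ₑ ∧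
      ∀ (f : (Fin d → ℝ) → ℂ) (hf : MemAmalgam p 1 ω f),
        L (hf.toLp hω) = ∫ x, f x * φ x := by
  obtain ⟨φ, hφm, hφL, hLφ⟩ := exists_integral_mul_of_amalgamLp hp hω hω₀ L
  have hφ : amalgamNormTop p' (fun x => (ω x)⁻¹) φ ≤ ‖L‖ₑ :=
    iSup_le fun α => (hφL α).trans (enorm_comp_lpSingle_le L α)
  refine ⟨φ, ⟨hφm, hφ.trans_lt enorm_lt_top⟩, hφ, fun f hf => hLφ f hf ?_⟩
  exact ⟨(hf.1.mul hφm).aestronglyMeasurable,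
    (lintegral_enorm_mul_le_amalgamNorm_one_mul_amalgamNormTop hp hω hω₀ hf.1 hφm).trans_lt
      (ENNReal.mul_lt_top hf.2 (hφ.trans_lt enorm_lt_top))⟩

lemma exists_memAmalgam_integral_mul {s' : ℝ} (hp : p.HolderConjugate p')
    (hs : s.HolderConjugate s') (hω : Measurable ω) (hω₀ : ∀ x, ω x ≠ 0)
    (L : StrongDual ℂ (AmalgamLp d p s)) :
    ∃ φ : (Fin d → ℝ) → ℂ, MemAmalgam p' s' (fun x => (ω x)⁻¹) φ ∧
      amalgamNorm p' s' (fun x => (ω x)⁻¹) φ ≤ ‖L‖ₑ ∧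
      ∀ (f : (Fin d → ℝ) → ℂ) (hf : MemAmalgam p s ω f),
        L (hf.toLp hω) = ∫ x, f x * φ x := by
  obtain ⟨φ, hφm, hφL, hLφ⟩ := exists_integral_mul_of_amalgamLp hp hω hω₀ L
  have hs' : 0 < s' := hs.symm.pos
  have hφ : amalgamNorm p' s' (fun x => (ω x)⁻¹) φ ≤ ‖L‖ₑ := by
    refine le_trans ?_
      (tsum_enorm_comp_lpSingle_rpow_le L (by rwa [ENNReal.toReal_ofReal hs.nonneg]))
    rw [amalgamNorm]
    gcongr with α
    exact hφL α
  refine ⟨φ, ⟨hφm, hφ.trans_lt enorm_lt_top⟩, hφ, fun f hf => hLφ f hf ?_⟩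
  exact ⟨(hf.1.mul hφm).aestronglyMeasurable,
    (lintegral_enorm_mul_le_amalgamNorm_mul_amalgamNorm hp hs hω hω₀ hf.1 hφm).trans_lt
      (ENNReal.mul_lt_top hf.2 (hφ.trans_lt enorm_lt_top))⟩

end Dual

end Amalgam

section Fourier

variable {d : ℕ} {f g : (Fin d → ℝ) → ℂ}

lemma fourierT_eq_fourierIntegral (f : (Fin d → ℝ) → ℂ) :
    fourierT f = VectorFourier.fourierIntegral Real.fourierChar volume (dotProductBilin ℝ ℝ) f := by
  ext ξ
  refine integral_congr_ae (ae_of_all _ fun x => ?_)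
  simp only [Circle.smul_def, Real.fourierChar_apply, smul_eq_mul, dotProductBilin_apply_apply,
    dotProduct]
  congr 2
  push_cast
  ring

lemma fourierT_add (hf : Integrable f) (hg : Integrable g) :
    fourierT (f + g) = fourierT f + fourierT g := by
  simp_rw [fourierT_eq_fourierIntegral]
  have hcont : Continuous fun x : (Fin d → ℝ) × (Fin d → ℝ) => dotProductBilin ℝ ℝ x.1 x.2 :=
    continuous_fst.dotProduct continuous_snd
  exact VectorFourier.fourierIntegral_add Real.continuous_fourierChar hcont hf hg

lemma fourierT_smul (a : ℂ) (f : (Fin d → ℝ) → ℂ) : fourierT (a • f) = a • fourierT f := by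
  simp_rw [fourierT_eq_fourierIntegral]
  exact VectorFourier.fourierIntegral_const_smul _ _ _ _ _

lemma fourierT_zero : fourierT (0 : (Fin d → ℝ) → ℂ) = 0 := by
  simpa only [zero_smul] using fourierT_smul 0 (0 : (Fin d → ℝ) → ℂ)

lemma MemAmalgam.integrable_of_one_le {p : ℝ} {ω : (Fin d → ℝ) → ℝ} (hp : 1 ≤ p)
    (hω : ∀ x, 1 ≤ ω x) (hf : MemAmalgam p 1 ω f) : Integrable f := by
  refine ⟨hf.1.aestronglyMeasurable, lt_of_le_of_lt ?_ hf.2⟩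
  simp_rw [lintegral_eq_tsum_cube, amalgamNorm, div_one, ENNReal.rpow_one,
    ← eLpNorm_one_eq_lintegral_enorm]
  refine ENNReal.tsum_le_tsum fun α => (eLpNorm_le_eLpNorm_of_exponent_le
    (ENNReal.one_le_ofReal.2 hp) hf.1.aestronglyMeasurable).trans (eLpNorm_mono fun x => ?_)
  rw [norm_smul]
  exact le_mul_of_one_le_left (norm_nonneg _) ((hω x).trans (le_abs_self _))

end Fourier

section DualOfA

variable {d : ℕ} {p p' q q' r r' : ℝ} {ϑ₁ ϑ₂ : (Fin d → ℝ) → ℝ}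

lemma enorm_pairA_le (hp : p.HolderConjugate p') (hq : q.HolderConjugate q')
    (hr : r.HolderConjugate r') (hϑ₁ : Measurable ϑ₁) (hϑ₁₀ : ∀ x, ϑ₁ x ≠ 0)
    (hϑ₂ : Measurable ϑ₂) (hϑ₂₀ : ∀ x, ϑ₂ x ≠ 0) {φ ψ f : (Fin d → ℝ) → ℂ}
    (hφ : Measurable φ) (hψ : Measurable ψ) (hf : MemA p q r ϑ₁ ϑ₂ f) :
    ‖pairA φ ψ f‖ₑ ≤ (amalgamNormTop p' (fun x => (ϑ₁ x)⁻¹) φ +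
      amalgamNorm q' r' (fun x => (ϑ₂ x)⁻¹) ψ) * ANorm p q r ϑ₁ ϑ₂ f := by
  have hfφ := (enorm_integral_le_lintegral_enorm fun x => f x * φ x).trans
    (lintegral_enorm_mul_le_amalgamNorm_one_mul_amalgamNormTop hp hϑ₁ hϑ₁₀ hf.1.1 hφ)
  have hfψ := (enorm_integral_le_lintegral_enorm fun x => fourierT f x * ψ x).trans
    (lintegral_enorm_mul_le_amalgamNorm_mul_amalgamNorm hq hr hϑ₂ hϑ₂₀ hf.2.1 hψ)
  rw [ANorm]
  set N := amalgamNorm p 1 ϑ₁ f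
  set N' := amalgamNorm q r ϑ₂ (fourierT f)
  set C := amalgamNormTop p' (fun x => (ϑ₁ x)⁻¹) φ
  set C' := amalgamNorm q' r' (fun x => (ϑ₂ x)⁻¹) ψ
  calc ‖pairA φ ψ f‖ₑ ≤ N * C + N' * C' := (enorm_add_le _ _).trans (add_le_add hfφ hfψ)
    _ ≤ (N * C + N' * C') + (N' * C + N * C') := le_self_add
    _ = (C + C') * (N + N') := by ring

variable [Fact (1 ≤ ENNReal.ofReal p)] [Fact (1 ≤ ENNReal.ofReal q)] [Fact (1 ≤ ENNReal.ofReal r)]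

section Submodule

variable (q r) (hϑ₁ : Measurable ϑ₁) (hϑ₂ : Measurable ϑ₂)
  (hint : ∀ f : (Fin d → ℝ) → ℂ, MemAmalgam p 1 ϑ₁ f → Integrable f)

/-- The space `A^{p,1,q,r}_{ϑ₁,ϑ₂}(ℝ^d)` as a space of functions; functions that agree almost
everywhere are not identified. Integrability of the elements of `(L^p_{ϑ₁}, ℓ¹)` makes the
Fourier transform additive on them. -/
def submoduleA : Submodule ℂ ((Fin d → ℝ) → ℂ) where
  carrier := {f | MemA p q r ϑ₁ ϑ₂ f}
  add_mem' {f g} hf hg := ⟨hf.1.add hϑ₁ hg.1, by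
    rw [fourierT_add (hint f hf.1) (hint g hg.1)]
    exact hf.2.add hϑ₂ hg.2⟩
  zero_mem' := ⟨memAmalgam_zero, by rw [fourierT_zero]; exact memAmalgam_zero⟩
  smul_mem' a f hf := ⟨hf.1.smul hϑ₁ a, by
    rw [fourierT_smul]
    exact hf.2.smul hϑ₂ a⟩

/-- The embedding of `A^{p,1,q,r}_{ϑ₁,ϑ₂}(ℝ^d)` into `(L^p_{ϑ₁}, ℓ¹)`. -/
noncomputable def submoduleA.toAmalgamLp :
    submoduleA q r hϑ₁ hϑ₂ hint →ₗ[ℂ] AmalgamLp d p 1 where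
  toFun f := MemAmalgam.toLp hϑ₁ f.2.1
  map_add' f g := MemAmalgam.toLp_eq_of_ae_eq hϑ₁ _ (MemAmalgam.toLp_add_ae_eq hϑ₁ f.2.1 g.2.1)
  map_smul' a f := MemAmalgam.toLp_eq_of_ae_eq hϑ₁ _ (MemAmalgam.smul_toLp_ae_eq hϑ₁ a f.2.1)

/-- The Fourier transform as a map from `A^{p,1,q,r}_{ϑ₁,ϑ₂}(ℝ^d)` to `(L^q_{ϑ₂}, ℓ^r)`. -/
noncomputable def submoduleA.fourierToAmalgamLp :
    submoduleA q r hϑ₁ hϑ₂ hint →ₗ[ℂ] AmalgamLp d q r where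
  toFun f := MemAmalgam.toLp hϑ₂ f.2.2
  map_add' f g := MemAmalgam.toLp_eq_of_ae_eq hϑ₂ _ <| by
    rw [Submodule.coe_add, fourierT_add (hint f f.2.1) (hint g g.2.1)]
    exact MemAmalgam.toLp_add_ae_eq hϑ₂ f.2.2 g.2.2
  map_smul' a f := MemAmalgam.toLp_eq_of_ae_eq hϑ₂ _ <| by
    rw [Submodule.coe_smul, fourierT_smul]
    exact MemAmalgam.smul_toLp_ae_eq hϑ₂ a f.2.2

lemma submoduleA.ANorm_eq (f : submoduleA q r hϑ₁ hϑ₂ hint) :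
    ANorm p q r ϑ₁ ϑ₂ f = ‖toAmalgamLp q r hϑ₁ hϑ₂ hint f‖ₑ +
      ‖fourierToAmalgamLp q r hϑ₁ hϑ₂ hint f‖ₑ :=
  congrArg₂ (· + ·) (MemAmalgam.enorm_toLp hϑ₁ f.2.1).symm
    (MemAmalgam.enorm_toLp hϑ₂ f.2.2).symm

end Submodule

lemma exists_eq_pairA_of_enorm_le (hp : p.HolderConjugate p') (hq : q.HolderConjugate q')
    (hr : r.HolderConjugate r') (hϑ₁ : Measurable ϑ₁) (hϑ₁₀ : ∀ x, ϑ₁ x ≠ 0)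
    (hϑ₂ : Measurable ϑ₂) (hϑ₂₀ : ∀ x, ϑ₂ x ≠ 0)
    (hint : ∀ f : (Fin d → ℝ) → ℂ, MemAmalgam p 1 ϑ₁ f → Integrable f)
    (T : submoduleA q r hϑ₁ hϑ₂ hint →ₗ[ℂ] ℂ) {M : ℝ} (hM : 0 ≤ M)
    (hT : ∀ f, ‖T f‖ₑ ≤ ENNReal.ofReal M * ANorm p q r ϑ₁ ϑ₂ f) :
    ∃ φ ψ : (Fin d → ℝ) → ℂ, MemAmalgamTop p' (fun x => (ϑ₁ x)⁻¹) φ ∧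
      MemAmalgam q' r' (fun x => (ϑ₂ x)⁻¹) ψ ∧ (∀ f, T f = pairA φ ψ f) ∧
      amalgamNormTop p' (fun x => (ϑ₁ x)⁻¹) φ + amalgamNorm q' r' (fun x => (ϑ₂ x)⁻¹) ψ ≤
        ENNReal.ofReal (2 * M) := by
  obtain ⟨L₁, L₂, hL₁, hL₂, hTL⟩ := exists_dual_add_eq_of_norm_le hM
    (submoduleA.toAmalgamLp q r hϑ₁ hϑ₂ hint) (submoduleA.fourierToAmalgamLp q r hϑ₁ hϑ₂ hint) T
    fun f => by
      have := hT f
      rw [submoduleA.ANorm_eq, ← ofReal_norm, ← ofReal_norm, ← ofReal_norm,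
        ← ENNReal.ofReal_add (norm_nonneg _) (norm_nonneg _), ← ENNReal.ofReal_mul hM] at this
      exact (ENNReal.ofReal_le_ofReal_iff (by positivity)).1 this
  obtain ⟨φ, hφ, hφL, hLφ⟩ := exists_memAmalgamTop_integral_mul hp hϑ₁ hϑ₁₀ L₁
  obtain ⟨ψ, hψ, hψL, hLψ⟩ := exists_memAmalgam_integral_mul hq hr hϑ₂ hϑ₂₀ L₂
  refine ⟨φ, ψ, hφ, hψ, fun f => ?_, ?_⟩
  · exact (hTL f).trans (congrArg₂ (· + ·) (hLφ f f.2.1) (hLψ _ f.2.2))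
  · rw [two_mul, ENNReal.ofReal_add hM hM]
    refine add_le_add (hφL.trans ?_) (hψL.trans ?_) <;> rw [← ofReal_norm]
    exacts [ENNReal.ofReal_le_ofReal hL₁, ENNReal.ofReal_le_ofReal hL₂]

end DualOfA

theorem A_dual_iso_general {d : ℕ} (p q r p' q' r' : ℝ)
    (hp : 1 < p) (hq : 1 < q) (hr : 1 < r)
    (hpp' : 1 / p + 1 / p' = 1) (hqq' : 1 / q + 1 / q' = 1) (hrr' : 1 / r + 1 / r' = 1)
    (ϑ₁ ϑ₂ : (Fin d → ℝ) → ℝ) (hϑ₁ : Measurable ϑ₁) (hϑ₁₀ : ∀ x, ϑ₁ x ≠ 0)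
    (hϑ₂ : Measurable ϑ₂) (hϑ₂₀ : ∀ x, ϑ₂ x ≠ 0)
    (hint : ∀ f : (Fin d → ℝ) → ℂ, MemAmalgam p 1 ϑ₁ f → Integrable f) :
    ∃ c₁ c₂ : ℝ, 0 < c₁ ∧ 0 < c₂ ∧
      (∀ φ ψ : (Fin d → ℝ) → ℂ,
        MemAmalgamTop p' (fun x => (ϑ₁ x)⁻¹) φ →
        MemAmalgam q' r' (fun x => (ϑ₂ x)⁻¹) ψ →
        ∀ f : (Fin d → ℝ) → ℂ, MemA p q r ϑ₁ ϑ₂ f →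
          (‖pairA φ ψ f‖₊ : ℝ≥0∞) ≤ ENNReal.ofReal c₁ *
            (amalgamNormTop p' (fun x => (ϑ₁ x)⁻¹) φ +
              amalgamNorm q' r' (fun x => (ϑ₂ x)⁻¹) ψ) * ANorm p q r ϑ₁ ϑ₂ f) ∧
      (∀ T : ((Fin d → ℝ) → ℂ) → ℂ,
        (∀ f g : (Fin d → ℝ) → ℂ, MemA p q r ϑ₁ ϑ₂ f → MemA p q r ϑ₁ ϑ₂ g →
          T (fun x => f x + g x) = T f + T g) →
        (∀ (a : ℂ) (f : (Fin d → ℝ) → ℂ), MemA p q r ϑ₁ ϑ₂ f →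
          T (fun x => a * f x) = a * T f) →
        ∀ M : ℝ, 0 ≤ M →
        (∀ f : (Fin d → ℝ) → ℂ, MemA p q r ϑ₁ ϑ₂ f →
          (‖T f‖₊ : ℝ≥0∞) ≤ ENNReal.ofReal M * ANorm p q r ϑ₁ ϑ₂ f) →
        ∃ φ ψ : (Fin d → ℝ) → ℂ,
          MemAmalgamTop p' (fun x => (ϑ₁ x)⁻¹) φ ∧
          MemAmalgam q' r' (fun x => (ϑ₂ x)⁻¹) ψ ∧
          (∀ f : (Fin d → ℝ) → ℂ, MemA p q r ϑ₁ ϑ₂ f → T f = pairA φ ψ f) ∧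
          amalgamNormTop p' (fun x => (ϑ₁ x)⁻¹) φ +
            amalgamNorm q' r' (fun x => (ϑ₂ x)⁻¹) ψ ≤ ENNReal.ofReal (c₂ * M)) := by
  have hpc : p.HolderConjugate p' := Real.holderConjugate_iff.2 ⟨hp, by simpa using hpp'⟩
  have hqc : q.HolderConjugate q' := Real.holderConjugate_iff.2 ⟨hq, by simpa using hqq'⟩
  have hrc : r.HolderConjugate r' := Real.holderConjugate_iff.2 ⟨hr, by simpa using hrr'⟩
  have : Fact (1 ≤ ENNReal.ofReal p) := ⟨ENNReal.one_le_ofReal.2 hp.le⟩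
  have : Fact (1 ≤ ENNReal.ofReal q) := ⟨ENNReal.one_le_ofReal.2 hq.le⟩
  have : Fact (1 ≤ ENNReal.ofReal r) := ⟨ENNReal.one_le_ofReal.2 hr.le⟩
  refine ⟨1, 2, one_pos, two_pos, fun φ ψ hφ hψ f hf => ?_, fun T hTadd hTsmul M hM hT => ?_⟩
  · rw [ENNReal.ofReal_one, one_mul]
    exact enorm_pairA_le hpc hqc hrc hϑ₁ hϑ₁₀ hϑ₂ hϑ₂₀ hφ.1 hψ.1 hf
  · let T' : submoduleA q r hϑ₁ hϑ₂ hint →ₗ[ℂ] ℂ :=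
      { toFun := fun f => T f
        map_add' := fun f g => hTadd f g f.2 g.2
        map_smul' := fun a f => hTsmul a f f.2 }
    obtain ⟨φ, ψ, hφ, hψ, hTφψ, hbound⟩ := exists_eq_pairA_of_enorm_le hpc hqc hrc hϑ₁ hϑ₁₀ hϑ₂
      hϑ₂₀ hint T' hM fun f => hT f f.2
    exact ⟨φ, ψ, hφ, hψ, fun f hf => hTφψ ⟨f, hf⟩, hbound⟩

/-- the continuous dual of `A^{p,1,q,r}_{ϑ₁,ϑ₂}(ℝ^d)` is isomorphic,
via a bounded bijection with bounded inverse, to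
`((L^{p'}_{ϑ₁⁻¹}, ℓ^∞) × (L^{q'}_{ϑ₂⁻¹}, ℓ^{r'}))/K`: every pair induces a bounded
functional via the pairing (with kernel exactly `K`), and every bounded linear
functional on `A` is induced by a pair whose norm is controlled by the operator
norm (i.e. a representative of quotient norm comparable to the functional norm). -/
theorem A_dual_iso {d : ℕ} (p q r p' q' r' : ℝ)
    (hp : 1 < p) (hq : 1 < q) (hr : 1 < r)
    (hpp' : 1 / p + 1 / p' = 1) (hqq' : 1 / q + 1 / q' = 1) (hrr' : 1 / r + 1 / r' = 1)
    (ϑ₁ ϑ₂ : (Fin d → ℝ) → ℝ) (h1 : IsBeurling ϑ₁) (h2 : IsBeurling ϑ₂) :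
    ∃ c₁ c₂ : ℝ, 0 < c₁ ∧ 0 < c₂ ∧
      (∀ φ ψ : (Fin d → ℝ) → ℂ,
        MemAmalgamTop p' (fun x => (ϑ₁ x)⁻¹) φ →
        MemAmalgam q' r' (fun x => (ϑ₂ x)⁻¹) ψ →
        ∀ f : (Fin d → ℝ) → ℂ, MemA p q r ϑ₁ ϑ₂ f →
          (‖pairA φ ψ f‖₊ : ℝ≥0∞) ≤ ENNReal.ofReal c₁ *
            (amalgamNormTop p' (fun x => (ϑ₁ x)⁻¹) φ +
              amalgamNorm q' r' (fun x => (ϑ₂ x)⁻¹) ψ) * ANorm p q r ϑ₁ ϑ₂ f) ∧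
      (∀ T : ((Fin d → ℝ) → ℂ) → ℂ,
        (∀ f g : (Fin d → ℝ) → ℂ, MemA p q r ϑ₁ ϑ₂ f → MemA p q r ϑ₁ ϑ₂ g →
          T (fun x => f x + g x) = T f + T g) →
        (∀ (a : ℂ) (f : (Fin d → ℝ) → ℂ), MemA p q r ϑ₁ ϑ₂ f →
          T (fun x => a * f x) = a * T f) →
        ∀ M : ℝ, 0 ≤ M →
        (∀ f : (Fin d → ℝ) → ℂ, MemA p q r ϑ₁ ϑ₂ f →
          (‖T f‖₊ : ℝ≥0∞) ≤ ENNReal.ofReal M * ANorm p q r ϑ₁ ϑ₂ f) →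
        ∃ φ ψ : (Fin d → ℝ) → ℂ,
          MemAmalgamTop p' (fun x => (ϑ₁ x)⁻¹) φ ∧
          MemAmalgam q' r' (fun x => (ϑ₂ x)⁻¹) ψ ∧
          (∀ f : (Fin d → ℝ) → ℂ, MemA p q r ϑ₁ ϑ₂ f → T f = pairA φ ψ f) ∧
          amalgamNormTop p' (fun x => (ϑ₁ x)⁻¹) φ +
            amalgamNorm q' r' (fun x => (ϑ₂ x)⁻¹) ψ ≤ ENNReal.ofReal (c₂ * M)) :=
  A_dual_iso_general p q r p' q' r' hp hq hr hpp' hqq' hrr' ϑ₁ ϑ₂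
    h1.1 (fun x => (zero_lt_one.trans_le (h1.2.1 x)).ne')
    h2.1 (fun x => (zero_lt_one.trans_le (h2.2.1 x)).ne')
    fun _ hf => hf.integrable_of_one_le hp.le h1.2.1
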